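/- For every deterministic classical strategy for the (2,3) random exclusion code with one bit of communication, the number of pairs (a,i) ∈ ({0,1,2}×{0,1,2})×{1,2} on which the strategy succeeds (i.e. b(E(a),i) ≠ a_i) is at most 16 out of 18, and there exists a strategy achieving exactly 16. Consequently, the maximum average success probability over all deterministic classical strategies equals 8/9, i.e. 16/18 is the greatest element of the set of achievable success counts. -/

import Mathlib

/-!
Write `p₀, p₁` for the two possible answers `b (0, 0), b (1, 0)` to the first question and
`q₀, q₁` for the answers `b (0, 1), b (1, 1)` to the second. It suffices to find two distinct
failing pairs. If `p₀ ≠ p₁`, the words `(p₀, q₁)` and `(p₁, q₀)` are distinct, and each fails on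
some question whichever bit encodes it. If `p₀ = p₁`, every word starting with `p₀` fails on the
first question. For attainment, answer both questions by the received bit and encode a word by
`1` exactly when it contains a `0` and is not `(0, 1)`: only `(0, 1)` and `(1, 0)` fail, once each.
-/


/-- Number of pairs `(a, i)` on which the deterministic classical strategy `(E, b)` for
the `(2,3)` random exclusion code succeeds, i.e. `b (E a) i ≠ aᵢ`. -/
def recSuccessCount3 (E : Fin 3 × Fin 3 → Fin 2) (b : Fin 2 × Fin 2 → Fin 3) : ℕ :=
  (Finset.univ.filter fun x : (Fin 3 × Fin 3) × Fin 2 =>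
    b (E x.1, x.2) ≠ (if x.2 = 0 then x.1.1 else x.1.2)).card

/-- Two distinct failing pairs bound the success count by `18 - 2`. -/
lemma recSuccessCount3_le_of_failures (E : Fin 3 × Fin 3 → Fin 2) (b : Fin 2 × Fin 2 → Fin 3)
    (x y : (Fin 3 × Fin 3) × Fin 2) (hxy : x ≠ y)
    (hx : b (E x.1, x.2) = if x.2 = 0 then x.1.1 else x.1.2)
    (hy : b (E y.1, y.2) = if y.2 = 0 then y.1.1 else y.1.2) :
    recSuccessCount3 E b ≤ 16 := by
  have hsub : (Finset.univ.filter fun x : (Fin 3 × Fin 3) × Fin 2 =>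
      b (E x.1, x.2) ≠ (if x.2 = 0 then x.1.1 else x.1.2)) ⊆ ({x, y} : Finset _)ᶜ := by
    intro z hz
    simp only [Finset.mem_filter, Finset.mem_univ, true_and] at hz
    simp only [Finset.mem_compl, Finset.mem_insert, Finset.mem_singleton, not_or]
    exact ⟨fun h => hz (h ▸ hx), fun h => hz (h ▸ hy)⟩
  have hcard := Finset.card_le_card hsub
  rw [Finset.card_compl, Finset.card_pair hxy] at hcard
  simpa [recSuccessCount3] using hcard

lemma recSuccessCount3_le (E : Fin 3 × Fin 3 → Fin 2) (b : Fin 2 × Fin 2 → Fin 3) :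
    recSuccessCount3 E b ≤ 16 := by
  by_cases h : b (0, 0) = b (1, 0)
  · have hb : ∀ e : Fin 2, b (e, 0) = b (0, 0) := by
      intro e
      fin_cases e
      · rfl
      · exact h.symm
    exact recSuccessCount3_le_of_failures E b ((b (0, 0), 0), 0) ((b (0, 0), 1), 0)
      (by simp) (by simp [hb]) (by simp [hb])
  · -- `(p₀, q₁)` fails on the question indexed by its encoding, `(p₁, q₀)` on the other one.
    refine recSuccessCount3_le_of_failures E b
      ((b (0, 0), b (1, 1)), E (b (0, 0), b (1, 1)))
      ((b (1, 0), b (0, 1)), 1 - E (b (1, 0), b (0, 1))) (fun hxy => h ?_) ?_ ?_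
    · exact congrArg (fun z => z.1.1) hxy
    · dsimp only
      generalize E (b (0, 0), b (1, 1)) = e
      fin_cases e <;> simp
    · dsimp only
      generalize E (b (1, 0), b (0, 1)) = e
      fin_cases e <;> simp

lemma exists_recSuccessCount3_eq :
    ∃ (E : Fin 3 × Fin 3 → Fin 2) (b : Fin 2 × Fin 2 → Fin 3), recSuccessCount3 E b = 16 :=
  ⟨fun a => if (a.1 = 0 ∨ a.2 = 0) ∧ a ≠ (0, 1) then 1 else 0,
    fun x => if x.1 = 0 then 0 else 1, by decide⟩

theorem stmt0 :
    (∀ (E : Fin 3 × Fin 3 → Fin 2) (b : Fin 2 × Fin 2 → Fin 3),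
      recSuccessCount3 E b ≤ 16) ∧
    (∃ (E : Fin 3 × Fin 3 → Fin 2) (b : Fin 2 × Fin 2 → Fin 3),
      recSuccessCount3 E b = 16) ∧
    IsGreatest {k : ℕ | ∃ (E : Fin 3 × Fin 3 → Fin 2) (b : Fin 2 × Fin 2 → Fin 3),
      k = recSuccessCount3 E b} 16 ∧
    IsGreatest {p : ℚ | ∃ (E : Fin 3 × Fin 3 → Fin 2) (b : Fin 2 × Fin 2 → Fin 3),
      p = (recSuccessCount3 E b : ℚ) / 18} (8 / 9) := by
  obtain ⟨E, b, h⟩ := exists_recSuccessCount3_eq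
  refine ⟨recSuccessCount3_le, ⟨E, b, h⟩, ⟨⟨E, b, h.symm⟩, ?_⟩, ⟨E, b, ?_⟩, ?_⟩
  · rintro k ⟨E, b, rfl⟩
    exact recSuccessCount3_le E b
  · rw [h]
    norm_num
  · rintro p ⟨E, b, rfl⟩
    have hle : (recSuccessCount3 E b : ℚ) ≤ 16 := by exact_mod_cast recSuccessCount3_le E b
    linarith
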